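/- Let ν ∈ (0,1), let u ∈ E be a unit vector with ⟨u, H u⟩ ≤ ν λ_min(H) < 0 and ⟨G, u⟩ ≤ 0, and let η^E := t* u where t* ≥ 0 is a global minimizer of t ↦ m(t u) over t ≥ 0. Then ‖η^E‖ ≥ ν |λ_min(H)| / σ. (Inequality (5) of Lemma 3.1, the eigenstep length bound.) -/

import Mathlib

open RealInnerProductSpace

/-!
Along the ray through `u` the model is the cubic `a t + (b / 2) t² + (s / 3) t³` with `a = ⟪G, u⟫`,
`b = ⟪H u, u⟫` and `s = σ ‖u‖³`. At a local minimizer `t > 0` the derivative `a + b t + s t²`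
vanishes, so `a ≤ 0` forces `t (b + s t) ≥ 0` and hence `b + s t ≥ 0`. A minimizer `t = 0` is
compatible with `a ≤ 0` only if `b ≥ 0`, which is the same inequality. One-sided difference
quotients cover both cases.
-/

open Set Filter Topology

section Cubic

variable {a b s t : ℝ}

lemma eventually_secant_nonneg_of_isLocalMinOn_cubic (ha : a ≤ 0) (ht : 0 ≤ t)
    (hmin : IsLocalMinOn (fun x ↦ a * x + b / 2 * x ^ 2 + s / 3 * x ^ 3) (Ici 0) t) :
    ∀ᶠ x in 𝓝[>] t, 0 ≤ b / 2 * (x + t) + s / 3 * (x ^ 2 + x * t + t ^ 2) := by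
  have hmin_right := hmin.filter_mono (nhdsWithin_mono t (Ioi_subset_Ici ht))
  filter_upwards [hmin_right, self_mem_nhdsWithin] with x hx htx
  have hsub : 0 < x - t := sub_pos.mpr htx
  have hsecant : 0 ≤ (x - t) * (a + b / 2 * (x + t) + s / 3 * (x ^ 2 + x * t + t ^ 2)) := by
    linear_combination hx
  linarith [nonneg_of_mul_nonneg_right hsecant hsub]

lemma add_mul_nonneg_of_isLocalMinOn_cubic (ha : a ≤ 0) (ht : 0 ≤ t)
    (hmin : IsLocalMinOn (fun x ↦ a * x + b / 2 * x ^ 2 + s / 3 * x ^ 3) (Ici 0) t) :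
    0 ≤ b + s * t := by
  have hsecant := eventually_secant_nonneg_of_isLocalMinOn_cubic ha ht hmin
  rcases ht.eq_or_lt with rfl | htpos
  · have hquot : ∀ᶠ x in 𝓝[>] (0 : ℝ), 0 ≤ b + s * (2 / 3 * x) := by
      filter_upwards [hsecant, self_mem_nhdsWithin] with x hx (hxpos : 0 < x)
      refine nonneg_of_mul_nonneg_right (a := x / 2) ?_ (half_pos hxpos)
      linear_combination hx
    have hlim : Tendsto (fun x : ℝ ↦ b + s * (2 / 3 * x)) (𝓝[>] 0) (𝓝 (b + s * 0)) :=
      (Continuous.tendsto' (by fun_prop) _ _ (by ring)).mono_left nhdsWithin_le_nhds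
    exact ge_of_tendsto hlim hquot
  · have hlim : Tendsto (fun x : ℝ ↦ b / 2 * (x + t) + s / 3 * (x ^ 2 + x * t + t ^ 2))
        (𝓝[>] t) (𝓝 (t * (b + s * t))) :=
      (Continuous.tendsto' (by fun_prop) _ _ (by ring)).mono_left nhdsWithin_le_nhds
    exact nonneg_of_mul_nonneg_right (ge_of_tendsto hlim hsecant) htpos

end Cubic

section CubicModel

variable {E : Type*} [SeminormedAddCommGroup E] [InnerProductSpace ℝ E]

/-- The cubic-regularized model `m` with gradient `G`, Hessian `H` and regularization parameter
`σ`. -/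
noncomputable def cubicModel (G : E) (H : E →ₗ[ℝ] E) (σ : ℝ) (η : E) : ℝ :=
  ⟪G, η⟫ + (1 / 2) * ⟪H η, η⟫ + (σ / 3) * ‖η‖ ^ 3

variable {G : E} {H : E →ₗ[ℝ] E} {σ t : ℝ} {u : E}

lemma cubicModel_smul_of_nonneg (ht : 0 ≤ t) :
    cubicModel G H σ (t • u) =
      ⟪G, u⟫ * t + ⟪H u, u⟫ / 2 * t ^ 2 + σ * ‖u‖ ^ 3 / 3 * t ^ 3 := by
  simp only [cubicModel, map_smul, real_inner_smul_left, real_inner_smul_right, norm_smul,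
    Real.norm_of_nonneg ht]
  ring

theorem eigen_point_length_general (hGu : ⟪G, u⟫ ≤ 0) (ht : 0 ≤ t)
    (hmin : IsLocalMinOn (fun x : ℝ ↦ cubicModel G H σ (x • u)) (Ici 0) t) :
    -⟪H u, u⟫ ≤ σ * ‖u‖ ^ 2 * ‖t • u‖ := by
  have hcubic : 0 ≤ ⟪H u, u⟫ + σ * ‖u‖ ^ 3 * t :=
    add_mul_nonneg_of_isLocalMinOn_cubic hGu ht <|
      hmin.congr (eventually_mem_nhdsWithin.mono fun _ ↦ cubicModel_smul_of_nonneg) ht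
  rw [norm_smul, Real.norm_of_nonneg ht]
  linear_combination hcubic

end CubicModel

/-- Inequality (5) of Lemma 3.1: the eigenstep length bound. -/
theorem eigen_point_length
    {E : Type*} [NormedAddCommGroup E] [InnerProductSpace ℝ E] [FiniteDimensional ℝ E]
    (G : E) (H : E →L[ℝ] E) (hH : IsSelfAdjoint H)
    (σ : ℝ) (hσ : 0 < σ)
    (m : E → ℝ)
    (hm : ∀ ξ : E, m ξ = ⟪G, ξ⟫ + (1 / 2) * ⟪H ξ, ξ⟫ + (σ / 3) * ‖ξ‖ ^ 3)
    (lammin : ℝ)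
    (hlam : lammin = sInf ((fun u : E => ⟪u, H u⟫) '' {u : E | ‖u‖ = 1}))
    (ν : ℝ) (hν : ν ∈ Set.Ioo (0 : ℝ) 1)
    (u : E) (hu : ‖u‖ = 1)
    (hcurv : ⟪u, H u⟫ ≤ ν * lammin) (hneg : ν * lammin < 0)
    (hGu : ⟪G, u⟫ ≤ 0)
    (tstar : ℝ) (ht : 0 ≤ tstar)
    (hmin : ∀ t : ℝ, 0 ≤ t → m (tstar • u) ≤ m (t • u))
    (ηE : E) (hηE : ηE = tstar • u) :
    ‖ηE‖ ≥ ν * |lammin| / σ := by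
  obtain rfl : m = cubicModel G H σ := funext hm
  have hlength := eigen_point_length_general hGu ht (isMinOn_iff.mpr hmin).localize
  rw [ContinuousLinearMap.coe_coe, real_inner_comm, hu, ← hηE] at hlength
  rw [ge_iff_le, div_le_iff₀' hσ, abs_of_neg (neg_of_mul_neg_right hneg hν.1.le)]
  linarith
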